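/- Let R ⊆ ℝⁿ be a compact convex set, let g be twice continuously differentiable on an open set containing R with ∇²g(z) ⪰ μ·I for all z ∈ R and some μ > 0, let ε > 0, and let f be a layered feedforward network on ℝⁿ of depth d with widths ω₁, …, ω_d whose activation σ is piecewise linear with t pieces, such that f is an ε-approximation of g on R. Then t^{2|H|} ≥ μ · diam(R)² / (16 ε), where |H| = ω₁ + … + ω_d is the number of hidden units of f and diam(R) = sup_{x, y ∈ R} ‖x − y‖₂. -/

import Mathlib

noncomputable def hess {n : ℕ} (g : EuclideanSpace ℝ (Fin n) → ℝ)
    (z : EuclideanSpace ℝ (Fin n)) : Matrix (Fin n) (Fin n) ℝ :=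
  fun i j => iteratedFDeriv ℝ 2 g z ![EuclideanSpace.single i 1, EuclideanSpace.single j 1]

/-- `σ : ℝ → ℝ` is piecewise linear with `t` pieces: `ℝ` is the union of `t` pairwise
disjoint nonempty intervals on each of which `σ` coincides with an affine function. -/
def PiecewiseLinear (σ : ℝ → ℝ) (t : ℕ) : Prop :=
  ∃ I : Fin t → Set ℝ,
    (∀ i, (I i).Nonempty) ∧ (∀ i, Convex ℝ (I i)) ∧
    (Pairwise fun i j => Disjoint (I i) (I j)) ∧
    (⋃ i, I i) = Set.univ ∧
    ∀ i, ∃ a b : ℝ, ∀ z ∈ I i, σ z = a * z + b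

/-- A layered feedforward network on `ℝⁿ`, allowing connections from all earlier layers
and from the input.  Layers are indexed by `0, …, depth - 1`. -/
structure LayeredNet (n : ℕ) where
  depth : ℕ
  width : ℕ → ℕ
  Win : (i : ℕ) → Fin (width i) → Fin n → ℝ
  W : (i j : ℕ) → Fin (width i) → Fin (width j) → ℝ
  b : (i : ℕ) → Fin (width i) → ℝ
  cin : Fin n → ℝ
  c : (i : ℕ) → Fin (width i) → ℝ
  c0 : ℝ

/-- The output of the hidden units in layer `i`. -/
noncomputable def LayeredNet.layer {n : ℕ} (N : LayeredNet n) (σ : ℝ → ℝ)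
    (x : EuclideanSpace ℝ (Fin n)) : (i : ℕ) → Fin (N.width i) → ℝ
  | i => fun k => σ ((∑ m, N.Win i k m * x m) +
      (∑ j : Fin i, ∑ m, N.W i j k m * N.layer σ x j m) + N.b i k)
  termination_by i => i
  decreasing_by exact j.isLt

/-- The (real-valued) output of the network with activation `σ`. -/
noncomputable def LayeredNet.eval {n : ℕ} (N : LayeredNet n) (σ : ℝ → ℝ)
    (x : EuclideanSpace ℝ (Fin n)) : ℝ :=
  (∑ m, N.cin m * x m) + (∑ i ∈ Finset.range N.depth, ∑ m, N.c i m * N.layer σ x i m) + N.c0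

/-- The number of hidden units `|H| = ω₁ + ⋯ + ω_d`. -/
def LayeredNet.numHidden {n : ℕ} (N : LayeredNet n) : ℕ :=
  ∑ i ∈ Finset.range N.depth, N.width i

/-!
Recording which piece of the activation each hidden unit uses splits `ℝⁿ` into at most `t ^ |H|`
regions. By induction on the layers each region is convex and the network is affine on it. For an
affine function that is `ε`-close to `g` on a convex set, comparing values at `x`, `y` and their
midpoint, where strong convexity gains `μ / 8 * dist x y ^ 2`, gives `dist x y ^ 2 ≤ 16 * ε / μ`.
Finally, the diameter of a connected set is at most the sum of the diameters of the sets in a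
countable cover: push the cover forward to the real line by the distance to a point and use
subadditivity of Lebesgue measure.
-/

open Set MeasureTheory
open scoped Matrix

section AffineOn

variable {E F G : Type*} [AddCommGroup E] [Module ℝ E] [AddCommGroup F] [Module ℝ F]
  [AddCommGroup G] [Module ℝ G] {s : Set E}

/-- `f` is affine on `s` if it coincides there with an affine map of the whole space. The set `s`
need not be convex. -/
def AffineOn (s : Set E) (f : E → F) : Prop :=
  ∃ A : E →ᵃ[ℝ] F, EqOn f A s

theorem affineOn_const (s : Set E) (c : F) : AffineOn s fun _ : E => c :=
  ⟨AffineMap.const ℝ E c, fun _ _ => rfl⟩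

theorem affineOn_linearMap (s : Set E) (L : E →ₗ[ℝ] F) : AffineOn s L :=
  ⟨L.toAffineMap, fun _ _ => rfl⟩

theorem AffineOn.mono {t : Set E} {f : E → F} (hf : AffineOn t f) (hst : s ⊆ t) : AffineOn s f := by
  obtain ⟨A, hA⟩ := hf
  exact ⟨A, hA.mono hst⟩

theorem AffineOn.add {f g : E → F} (hf : AffineOn s f) (hg : AffineOn s g) :
    AffineOn s fun x => f x + g x := by
  obtain ⟨A, hA⟩ := hf
  obtain ⟨B, hB⟩ := hg
  exact ⟨A + B, fun x hx => congrArg₂ (· + ·) (hA hx) (hB hx)⟩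

theorem AffineOn.const_smul {f : E → F} (c : ℝ) (hf : AffineOn s f) :
    AffineOn s fun x => c • f x := by
  obtain ⟨A, hA⟩ := hf
  exact ⟨c • A, fun x hx => congrArg (c • ·) (hA hx)⟩

theorem AffineOn.sum {ι : Type*} {u : Finset ι} {f : ι → E → F}
    (hf : ∀ i ∈ u, AffineOn s (f i)) : AffineOn s fun x => ∑ i ∈ u, f i x := by
  have h := Finset.sum_induction f (AffineOn s) (fun _ _ => AffineOn.add) (affineOn_const s 0) hf
  simpa only [Finset.sum_fn] using h

theorem AffineOn.comp {t : Set F} {g : F → G} {f : E → F} (hg : AffineOn t g)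
    (hf : AffineOn s f) (hst : MapsTo f s t) : AffineOn s (g ∘ f) := by
  obtain ⟨B, hB⟩ := hg
  obtain ⟨A, hA⟩ := hf
  exact ⟨B.comp A, fun x hx => (hB (hst hx)).trans (congrArg B (hA hx))⟩

theorem AffineOn.mapsTo_convexHull {f : E → F} {t : Set F} (hf : AffineOn (convexHull ℝ s) f)
    (hst : MapsTo f s t) (ht : Convex ℝ t) : MapsTo f (convexHull ℝ s) t := by
  obtain ⟨A, hA⟩ := hf
  have hsA : MapsTo A s t := hst.congr (hA.mono (subset_convexHull ℝ s))
  intro x hx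
  rw [hA hx]
  exact convexHull_min hsA.subset_preimage (ht.affine_preimage A) hx

theorem AffineOn.map_combo {f : E → F} (hf : AffineOn s f) {x y : E} (hx : x ∈ s) (hy : y ∈ s)
    {a b : ℝ} (hab : a + b = 1) (hxy : a • x + b • y ∈ s) :
    f (a • x + b • y) = a • f x + b • f y := by
  obtain ⟨A, hA⟩ := hf
  rw [hA hx, hA hy, hA hxy, Convex.combo_affine_apply hab]

theorem affineOn_sum_mul {ι : Type*} [Fintype ι] (s : Set (EuclideanSpace ℝ ι)) (w : ι → ℝ) :
    AffineOn s fun x => ∑ i, w i * x i :=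
  AffineOn.sum fun i _ => (affineOn_linearMap s (EuclideanSpace.projₗ i)).const_smul (w i)

end AffineOn

section StrongConvexOn

variable {E : Type*} [NormedAddCommGroup E] [NormedSpace ℝ E] {s : Set E} {f g : E → ℝ} {m ε : ℝ}

theorem strongConvexOn_subset {t : Set E} (hf : StrongConvexOn t m f) (hst : s ⊆ t)
    (hs : Convex ℝ s) : StrongConvexOn s m f :=
  ⟨hs, fun _ hx _ hy => hf.2 (hst hx) (hst hy)⟩

theorem strongConvexOn_of_hasDerivWithinAt2 {D : Set ℝ} (hD : Convex ℝ D) {φ φ' φ'' : ℝ → ℝ}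
    (hφ : ContinuousOn φ D) (hφ' : ∀ t ∈ interior D, HasDerivWithinAt φ (φ' t) (interior D) t)
    (hφ'' : ∀ t ∈ interior D, HasDerivWithinAt φ' (φ'' t) (interior D) t)
    (hm : ∀ t ∈ interior D, m ≤ φ'' t) : StrongConvexOn D m φ := by
  rw [strongConvexOn_iff_convex]
  simp only [Real.norm_eq_abs, sq_abs]
  refine convexOn_of_hasDerivWithinAt2_nonneg (f' := fun t => φ' t - m * t)
    (f'' := fun t => φ'' t - m) hD (by fun_prop) (fun t ht => ?_) (fun t ht => ?_)
    fun t ht => sub_nonneg.2 (hm t ht)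
  · refine ((hφ' t ht).sub ((hasDerivWithinAt_pow 2 t).const_mul (m / 2))).congr_deriv ?_
    ring
  · exact ((hφ'' t ht).sub ((hasDerivWithinAt_id t _).const_mul m)).congr_deriv (by rw [mul_one])

theorem strongConvexOn_of_comp_lineMap (hs : Convex ℝ s)
    (h : ∀ x ∈ s, ∀ y ∈ s,
      StrongConvexOn (Icc (0 : ℝ) 1) (m * ‖x - y‖ ^ 2) (f ∘ AffineMap.lineMap x y)) :
    StrongConvexOn s m f := by
  refine ⟨hs, fun x hx y hy a b ha hb hab => ?_⟩
  have hline := (h x hx y hy).2 (left_mem_Icc.2 zero_le_one) (right_mem_Icc.2 zero_le_one)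
    ha hb hab
  have hb_eq : AffineMap.lineMap x y b = a • x + b • y := by
    rw [AffineMap.lineMap_apply_module, ← hab, add_sub_cancel_right]
  simp only [Function.comp_apply, smul_eq_mul, mul_zero, mul_one, zero_add, hb_eq,
    AffineMap.lineMap_apply_zero, AffineMap.lineMap_apply_one, zero_sub, norm_neg, norm_one,
    one_pow] at hline
  simp only [smul_eq_mul]
  linarith

theorem strongConvexOn_of_hasFDerivWithinAt2 (hs : Convex ℝ s) {f' : E → E →L[ℝ] ℝ}
    {f'' : E → E →L[ℝ] E →L[ℝ] ℝ} (hf : ∀ x ∈ s, HasFDerivWithinAt f (f' x) s x)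
    (hf' : ∀ x ∈ s, HasFDerivWithinAt f' (f'' x) s x)
    (hm : ∀ x ∈ s, ∀ v, m * ‖v‖ ^ 2 ≤ f'' x v v) : StrongConvexOn s m f := by
  refine strongConvexOn_of_comp_lineMap hs fun x hx y hy => ?_
  let ℓ : ℝ → E := AffineMap.lineMap x y
  have hℓs : MapsTo ℓ (Icc 0 1) s := fun _ ht => hs.lineMap_mem hx hy ht
  have hℓ : ∀ t, HasDerivWithinAt ℓ (y - x) (Icc 0 1) t := fun _ =>
    AffineMap.hasDerivWithinAt_lineMap
  have hφ' : ∀ t ∈ Icc (0 : ℝ) 1, HasDerivWithinAt (f ∘ ℓ) (f' (ℓ t) (y - x)) (Icc 0 1) t :=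
    fun t ht => (hf _ (hℓs ht)).comp_hasDerivWithinAt t (hℓ t) hℓs
  have hφ'' : ∀ t ∈ Icc (0 : ℝ) 1, HasDerivWithinAt (fun t => f' (ℓ t) (y - x))
      (f'' (ℓ t) (y - x) (y - x)) (Icc 0 1) t := fun t ht => by
    simpa using ((hf' _ (hℓs ht)).comp_hasDerivWithinAt t (hℓ t) hℓs).clm_apply
      (hasDerivWithinAt_const t _ (y - x))
  refine strongConvexOn_of_hasDerivWithinAt2 (convex_Icc 0 1)
    (fun t ht => (hφ' t ht).continuousWithinAt)
    (fun t ht => (hφ' t (interior_subset ht)).mono interior_subset)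
    (fun t ht => (hφ'' t (interior_subset ht)).mono interior_subset) fun t ht => ?_
  rw [norm_sub_rev]
  exact hm _ (hℓs (interior_subset ht)) _

theorem mul_dist_sq_le_of_strongConvexOn_of_affineOn (hg : StrongConvexOn s m g)
    (hf : AffineOn s f) (hfg : ∀ z ∈ s, |f z - g z| ≤ ε) {x y : E} (hx : x ∈ s) (hy : y ∈ s) :
    m * dist x y ^ 2 ≤ 16 * ε := by
  have hhalf : (0 : ℝ) ≤ 1 / 2 := by norm_num
  have hsum : (1 / 2 + 1 / 2 : ℝ) = 1 := by norm_num
  have hmid := hg.1 hx hy hhalf hhalf hsum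
  have hf_mid := hf.map_combo hx hy hsum hmid
  have hg_mid := hg.2 hx hy hhalf hhalf hsum
  have hx' := abs_le.1 (hfg x hx)
  have hy' := abs_le.1 (hfg y hy)
  have hmid' := abs_le.1 (hfg _ hmid)
  rw [← dist_eq_norm] at hg_mid
  simp only [smul_eq_mul] at hf_mid hg_mid
  linarith

theorem ediam_le_of_strongConvexOn_of_affineOn (hg : StrongConvexOn s m g) (hm : 0 < m)
    (hf : AffineOn s f) (hfg : ∀ z ∈ s, |f z - g z| ≤ ε) :
    Metric.ediam s ≤ ENNReal.ofReal √(16 * ε / m) := by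
  refine Metric.ediam_le_of_forall_dist_le fun x hx y hy => Real.le_sqrt_of_sq_le ?_
  rw [le_div_iff₀' hm]
  exact mul_dist_sq_le_of_strongConvexOn_of_affineOn hg hf hfg hx hy

end StrongConvexOn

section Hessian

variable {n : ℕ} {s : Set (EuclideanSpace ℝ (Fin n))} {g : EuclideanSpace ℝ (Fin n) → ℝ}

theorem dotProduct_hess_mulVec (g : EuclideanSpace ℝ (Fin n) → ℝ)
    (z v w : EuclideanSpace ℝ (Fin n)) :
    v.ofLp ⬝ᵥ hess g z *ᵥ w.ofLp = fderiv ℝ (fderiv ℝ g) z v w := by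
  let b := (EuclideanSpace.basisFun (Fin n) ℝ).toBasis
  let B := (fderiv ℝ (fderiv ℝ g) z).toLinearMap₁₂
  have hB : hess g z = LinearMap.toMatrix₂ b b B := by
    ext i j
    simp [hess, b, B, iteratedFDeriv_two_apply, LinearMap.toMatrix₂_apply]
  rw [hB]
  exact (apply_eq_dotProduct_toMatrix₂_mulVec b b B v w).symm

theorem mul_norm_sq_le_fderiv_fderiv_of_posSemidef {z : EuclideanSpace ℝ (Fin n)} {μ : ℝ}
    (h : (hess g z - μ • (1 : Matrix (Fin n) (Fin n) ℝ)).PosSemidef)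
    (v : EuclideanSpace ℝ (Fin n)) : μ * ‖v‖ ^ 2 ≤ fderiv ℝ (fderiv ℝ g) z v v := by
  have hv := h.dotProduct_mulVec_nonneg v.ofLp
  rw [star_trivial, Matrix.sub_mulVec, dotProduct_sub, Matrix.smul_mulVec, Matrix.one_mulVec,
    dotProduct_smul, dotProduct_hess_mulVec, smul_eq_mul, sub_nonneg] at hv
  rwa [← real_inner_self_eq_norm_sq, EuclideanSpace.inner_eq_star_dotProduct, star_trivial]

theorem strongConvexOn_of_hess_sub_smul_one_posSemidef (hs : Convex ℝ s)
    {U : Set (EuclideanSpace ℝ (Fin n))} (hU : IsOpen U) (hsU : s ⊆ U) (hg : ContDiffOn ℝ 2 g U)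
    {μ : ℝ} (h : ∀ z ∈ s, (hess g z - μ • (1 : Matrix (Fin n) (Fin n) ℝ)).PosSemidef) :
    StrongConvexOn s μ g := by
  have hgz : ∀ z ∈ s, ContDiffAt ℝ 2 g z := fun z hz => hg.contDiffAt (hU.mem_nhds (hsU hz))
  refine strongConvexOn_of_hasFDerivWithinAt2 (f' := fderiv ℝ g) hs (fun z hz => ?_)
    (fun z hz => ?_) fun z hz => mul_norm_sq_le_fderiv_fderiv_of_posSemidef (h z hz)
  · exact ((hgz z hz).differentiableAt two_ne_zero).hasFDerivAt.hasFDerivWithinAt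
  · have hg' : ContDiffAt ℝ 1 (fderiv ℝ g) z := (hgz z hz).fderiv_right one_add_one_eq_two.le
    exact (hg'.differentiableAt one_ne_zero).hasFDerivAt.hasFDerivWithinAt

end Hessian

theorem ediam_le_tsum_ediam_of_isPreconnected {X ι : Type*} [PseudoMetricSpace X] [Countable ι]
    {s : Set X} (hs : IsPreconnected s) {C : ι → Set X} (hC : s ⊆ ⋃ i, C i) :
    Metric.ediam s ≤ ∑' i, Metric.ediam (C i) := by
  refine Metric.ediam_le fun x hx y hy => ?_
  have hIcc : Icc 0 (dist x y) ⊆ ⋃ i, dist x '' C i := by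
    have himage : Icc (dist x x) (dist x y) ⊆ dist x '' s :=
      (hs.image _ (by fun_prop)).Icc_subset (mem_image_of_mem _ hx) (mem_image_of_mem _ hy)
    rw [dist_self] at himage
    exact himage.trans ((image_mono hC).trans image_iUnion.subset)
  calc edist x y = volume (Icc 0 (dist x y)) := by rw [Real.volume_Icc, sub_zero, edist_dist]
    _ ≤ volume (⋃ i, dist x '' C i) := measure_mono hIcc
    _ ≤ ∑' i, volume (dist x '' C i) := measure_iUnion_le _
    _ ≤ ∑' i, Metric.ediam (C i) := ENNReal.tsum_le_tsum fun i =>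
      (Real.volume_le_diam _).trans <| by
        simpa using (LipschitzWith.dist_right x).ediam_image_le (C i)

theorem PiecewiseLinear.exists_convex_fiber_affineOn {σ : ℝ → ℝ} {t : ℕ}
    (hσ : PiecewiseLinear σ t) :
    ∃ κ : ℝ → Fin t, ∀ q, Convex ℝ (κ ⁻¹' {q}) ∧ AffineOn (κ ⁻¹' {q}) σ := by
  obtain ⟨I, -, hconv, hdisj, hcov, haff⟩ := hσ
  choose κ hκ using fun z => mem_iUnion.1 (hcov.ge (mem_univ z))
  have hκI : ∀ q, κ ⁻¹' {q} = I q := fun q => Subset.antisymm (fun z hz => hz ▸ hκ z)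
    fun z hz => hdisj.eq (not_disjoint_iff.2 ⟨z, hκ z, hz⟩)
  refine ⟨κ, fun q => ?_⟩
  rw [hκI q]
  obtain ⟨a, b, hab⟩ := haff q
  exact ⟨hconv q, a • AffineMap.id ℝ ℝ + AffineMap.const ℝ ℝ b, fun z hz => by simp [hab z hz]⟩

namespace LayeredNet

variable {n : ℕ} (N : LayeredNet n) (σ : ℝ → ℝ)

/-- The argument of the activation at unit `k` of layer `i`. -/
noncomputable def preactivation (i : ℕ) (k : Fin (N.width i))
    (x : EuclideanSpace ℝ (Fin n)) : ℝ :=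
  (∑ m, N.Win i k m * x m) + (∑ j : Fin i, ∑ m, N.W i j k m * N.layer σ x j m) + N.b i k

/-- The index type of the hidden units of `N`. -/
abbrev HiddenUnit : Type :=
  Σ i : Fin N.depth, Fin (N.width i)

/-- The set of inputs at which every hidden unit `u` operates on piece `p u` of the activation. The
pieces are encoded as the fibres of a map `κ` on the real line. -/
def activationRegion {ι : Type*} (κ : ℝ → ι) (p : N.HiddenUnit → ι) :
    Set (EuclideanSpace ℝ (Fin n)) :=
  {x | ∀ u : N.HiddenUnit, κ (N.preactivation σ u.1 u.2 x) = p u}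

theorem card_hiddenUnit : Fintype.card N.HiddenUnit = N.numHidden := by
  rw [Fintype.card_sigma, numHidden, Finset.sum_range]
  simp only [Fintype.card_fin]

theorem layer_eq_comp_preactivation (i : ℕ) (k : Fin (N.width i)) :
    (fun x => N.layer σ x i k) = σ ∘ N.preactivation σ i k := by
  funext x
  rw [layer]
  rfl

theorem iUnion_activationRegion {ι : Type*} (κ : ℝ → ι) :
    ⋃ p, N.activationRegion σ κ p = univ :=
  iUnion_eq_univ_iff.2 fun x => ⟨fun u => κ (N.preactivation σ u.1 u.2 x), fun _ => rfl⟩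

variable {N σ} {s : Set (EuclideanSpace ℝ (Fin n))}

theorem affineOn_preactivation {i : ℕ} (h : ∀ j < i, ∀ m, AffineOn s fun x => N.layer σ x j m)
    (k : Fin (N.width i)) : AffineOn s (N.preactivation σ i k) :=
  ((affineOn_sum_mul s (N.Win i k)).add
    (AffineOn.sum fun (j : Fin i) _ => AffineOn.sum fun m _ =>
      (h j j.isLt m).const_smul (N.W i j k m))).add (affineOn_const s (N.b i k))

theorem affineOn_eval (h : ∀ i < N.depth, ∀ k, AffineOn s fun x => N.layer σ x i k) :
    AffineOn s (N.eval σ) :=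
  ((affineOn_sum_mul s N.cin).add
    (AffineOn.sum fun i hi => AffineOn.sum fun m _ =>
      (h i (Finset.mem_range.1 hi) m).const_smul (N.c i m))).add (affineOn_const s N.c0)

variable {ι : Type*} {κ : ℝ → ι} {p : N.HiddenUnit → ι}

theorem mapsTo_preactivation_convexHull_activationRegion (hconv : ∀ q, Convex ℝ (κ ⁻¹' {q}))
    {i : ℕ} (hi : i < N.depth) (k : Fin (N.width i))
    (h : AffineOn (convexHull ℝ (N.activationRegion σ κ p)) (N.preactivation σ i k)) :
    MapsTo (N.preactivation σ i k) (convexHull ℝ (N.activationRegion σ κ p))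
      (κ ⁻¹' {p ⟨⟨i, hi⟩, k⟩}) :=
  h.mapsTo_convexHull (fun _ hx => hx ⟨⟨i, hi⟩, k⟩) (hconv _)

theorem affineOn_layer_convexHull_activationRegion
    (hκ : ∀ q, Convex ℝ (κ ⁻¹' {q}) ∧ AffineOn (κ ⁻¹' {q}) σ) {i : ℕ} (hi : i < N.depth)
    (k : Fin (N.width i)) :
    AffineOn (convexHull ℝ (N.activationRegion σ κ p)) fun x => N.layer σ x i k := by
  induction i using Nat.strong_induction_on with
  | _ i ih =>
    have hpre := affineOn_preactivation (fun j hj => ih j hj (hj.trans hi)) k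
    rw [layer_eq_comp_preactivation]
    exact (hκ _).2.comp hpre
      (mapsTo_preactivation_convexHull_activationRegion (fun q => (hκ q).1) hi k hpre)

theorem convex_activationRegion (hκ : ∀ q, Convex ℝ (κ ⁻¹' {q}) ∧ AffineOn (κ ⁻¹' {q}) σ)
    (p : N.HiddenUnit → ι) : Convex ℝ (N.activationRegion σ κ p) := by
  refine convexHull_eq_self.1 (Subset.antisymm (fun x hx u => ?_) (subset_convexHull ℝ _))
  have hpre := affineOn_preactivation (fun j hj =>
    affineOn_layer_convexHull_activationRegion hκ (p := p) (hj.trans u.1.isLt)) u.2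
  exact mapsTo_preactivation_convexHull_activationRegion (fun q => (hκ q).1) u.1.isLt u.2 hpre hx

theorem affineOn_eval_activationRegion
    (hκ : ∀ q, Convex ℝ (κ ⁻¹' {q}) ∧ AffineOn (κ ⁻¹' {q}) σ) (p : N.HiddenUnit → ι) :
    AffineOn (N.activationRegion σ κ p) (N.eval σ) := by
  rw [← (convex_activationRegion hκ p).convexHull_eq]
  exact affineOn_eval fun _ hi => affineOn_layer_convexHull_activationRegion hκ hi

end LayeredNet

theorem LayeredNet.ediam_le_of_strongConvexOn {n : ℕ} {R : Set (EuclideanSpace ℝ (Fin n))}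
    {g : EuclideanSpace ℝ (Fin n) → ℝ} {μ : ℝ} (hμ : 0 < μ) (hg : StrongConvexOn R μ g)
    {ε : ℝ} (N : LayeredNet n) {σ : ℝ → ℝ} {t : ℕ} (hσ : PiecewiseLinear σ t)
    (hf : ∀ z ∈ R, |N.eval σ z - g z| ≤ ε) :
    Metric.ediam R ≤ ENNReal.ofReal (t ^ N.numHidden * √(16 * ε / μ)) := by
  obtain ⟨κ, hκ⟩ := hσ.exists_convex_fiber_affineOn
  have hcover : R ⊆ ⋃ p, R ∩ N.activationRegion σ κ p := by
    rw [← inter_iUnion, N.iUnion_activationRegion, inter_univ]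
  have hcell (p : N.HiddenUnit → Fin t) :
      Metric.ediam (R ∩ N.activationRegion σ κ p) ≤ ENNReal.ofReal √(16 * ε / μ) :=
    ediam_le_of_strongConvexOn_of_affineOn
      (strongConvexOn_subset hg inter_subset_left (hg.1.inter (convex_activationRegion hκ p))) hμ
      ((affineOn_eval_activationRegion hκ p).mono inter_subset_right) fun z hz => hf z hz.1
  calc Metric.ediam R ≤ ∑' p, Metric.ediam (R ∩ N.activationRegion σ κ p) :=
        ediam_le_tsum_ediam_of_isPreconnected hg.1.isPreconnected hcover
    _ ≤ ∑' _ : N.HiddenUnit → Fin t, ENNReal.ofReal √(16 * ε / μ) := ENNReal.tsum_le_tsum hcell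
    _ = ENNReal.ofReal (t ^ N.numHidden * √(16 * ε / μ)) := by
      rw [tsum_fintype, Finset.sum_const, Finset.card_univ, Fintype.card_fun, N.card_hiddenUnit,
        Fintype.card_fin, nsmul_eq_mul, ENNReal.ofReal_mul (by positivity), ← Nat.cast_pow,
        ENNReal.ofReal_natCast]

theorem network_strongConvex_lower_bound_general {n : ℕ} {R : Set (EuclideanSpace ℝ (Fin n))}
    {g : EuclideanSpace ℝ (Fin n) → ℝ} {μ : ℝ} (hμ : 0 < μ) (hg : StrongConvexOn R μ g)
    {ε : ℝ} (hε : 0 < ε) (N : LayeredNet n) {σ : ℝ → ℝ} {t : ℕ} (hσ : PiecewiseLinear σ t)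
    (hf : ∀ z ∈ R, |N.eval σ z - g z| ≤ ε) :
    Bornology.IsBounded R ∧
      (t : ℝ) ^ (2 * N.numHidden) ≥ μ * Metric.diam R ^ 2 / (16 * ε) := by
  have hediam := N.ediam_le_of_strongConvexOn hμ hg hσ hf
  refine ⟨Metric.isBounded_iff_ediam_ne_top.2 <|
    ne_top_of_le_ne_top ENNReal.ofReal_ne_top hediam, ?_⟩
  have hdiam : Metric.diam R ≤ t ^ N.numHidden * √(16 * ε / μ) :=
    ENNReal.toReal_le_of_le_ofReal (by positivity) hediam
  rw [ge_iff_le, div_le_iff₀ (by positivity)]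
  calc μ * Metric.diam R ^ 2 ≤ μ * (t ^ N.numHidden * √(16 * ε / μ)) ^ 2 := by gcongr
    _ = t ^ (2 * N.numHidden) * (16 * ε) := by
      rw [mul_pow, Real.sq_sqrt (by positivity), ← pow_mul']
      field_simp

/-- Corollary 1: if a layered network with piecewise linear activation (`t` pieces)
ε-approximates a `μ`-strongly convex C² function on a compact convex set `R`, then
`t^{2|H|} ≥ μ·diam(R)²/(16 ε)`. -/
theorem network_strongConvex_lower_bound {n : ℕ}
    (R : Set (EuclideanSpace ℝ (Fin n))) (hRc : IsCompact R) (hR : Convex ℝ R)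
    (U : Set (EuclideanSpace ℝ (Fin n))) (hU : IsOpen U) (hRU : R ⊆ U)
    (g : EuclideanSpace ℝ (Fin n) → ℝ) (hg : ContDiffOn ℝ 2 g U)
    (μ : ℝ) (hμ : 0 < μ)
    (hstrong : ∀ z ∈ R, (hess g z - μ • (1 : Matrix (Fin n) (Fin n) ℝ)).PosSemidef)
    (ε : ℝ) (hε : 0 < ε)
    (N : LayeredNet n) (hd : 1 ≤ N.depth) (hw : ∀ i < N.depth, 1 ≤ N.width i)
    (σ : ℝ → ℝ) (t : ℕ) (ht : 1 ≤ t) (hσ : PiecewiseLinear σ t)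
    (hf : ∀ z ∈ R, |N.eval σ z - g z| ≤ ε) :
    (t : ℝ) ^ (2 * N.numHidden) ≥ μ * Metric.diam R ^ 2 / (16 * ε) := by
  exact (network_strongConvex_lower_bound_general hμ
    (strongConvexOn_of_hess_sub_smul_one_posSemidef hR hU hRU hg hstrong) hε N hσ hf).2
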